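/- For any m, p ∈ (ℕ∖{1}) ∪ {∞} with p ≥ m, there exists an achievable Cantor set C such that the k-fold algebraic sum C_k is a Cantor set for all k < m, a Cantorval for all k with m ≤ k < p, and an interval for all k ∈ ℕ with k ≥ p. -/

import Mathlib

/-!
The `k`-fold sum of the achievement set of `∑ a n` consists of all `∑ c n * a n` with integers
`0 ≤ c n ≤ k`. Grouping the terms into finite blocks turns it into a set of digit sums `∑ y j`,
where `y j` ranges over the finite set of values which the `j`-th block can take. Let `δ j` denote
the `j`-th scale, `δ j = (m j + 1) ^ s j * δ (j + 1)`. The `j`-th block consists of the terms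
`δ (j + 1) * (t j + (m j + 1) ^ i)` with `i < s j`, and of `s j` copies of `δ (j + 1) * t j`. The
offset `t j` is such that the block sum is `ρ * (δ j - δ (j + 1))`; so the terms after block `j`
add up to `ρ * δ (j + 1)`.

* If `k < m j` for all large `j`, then block `j` takes at most
  `(k + 1) ^ s j * (k * s j + 1) ≤ (m j + 1) ^ s j / 2` values, so the set is Lebesgue null and
  hence a Cantor set (`Blocks.Good.isCantorSet`).
* If `m j ≤ k` for all `j`, then the base `m j + 1` expansion, with the number of offsets evened
  out by the copies of `t j`, shows that block `j` takes `(m j + 1) ^ s j` values in arithmetic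
  progression with step `δ (j + 1)`. So every tail set contains an interval
  (`Blocks.Good.interior_tail`) and the set is the closure of its interior. If moreover
  `k * ρ < t j` infinitely often, then there are gaps `(k * ρ * δ (j + 1), δ (j + 1) * t j)`
  accumulating at `0`. Such gaps reappear to the right of the right endpoint of every gap
  (`DigitSys.gap`), and by symmetry to the left of every left endpoint, which makes the set a
  Cantorval (`isCantorval_of_gaps`).
* If `m j ≤ k` and `t j ≤ k * ρ` for all `j`, then a greedy expansion shows that the set is an
  interval (`unit_cover`, `greedy`).

For `m = ∞` the digit bounds `m j = j + 2` grow. For finite `m` they are constant: if `p = ∞`, then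
`ρ = 1` and growing `s j` let `t j` tend to infinity; if `p` is finite, then `s j` is constant and
`ρ` is chosen so that `t j = p * ρ`.
-/

open Set MeasureTheory Pointwise

/-- The achievement set (set of all subsums) of the series `∑ a n`. -/
noncomputable def achievementSet (a : ℕ → ℝ) : Set ℝ :=
  {x | ∃ I : Set ℕ, HasSum (fun i : I => a i) x}

/-- `tail a n` is the sum of the terms with index `≥ n`. -/
noncomputable def tail (a : ℕ → ℝ) (n : ℕ) : ℝ := ∑' i : ℕ, a (n + i)

/-- The set of `k`-initial subsums: sums over subsets of the first `k` terms. -/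
def Fset (a : ℕ → ℝ) (k : ℕ) : Set ℝ :=
  {x | ∃ I : Finset ℕ, I ⊆ Finset.range k ∧ x = ∑ i ∈ I, a i}

/-- The `k`-th iterate `I_k = ⋃_{f ∈ F_k} [f, f + r_k]`. -/
noncomputable def iter (a : ℕ → ℝ) (k : ℕ) : Set ℝ :=
  ⋃ f ∈ Fset a k, Set.Icc f (f + tail a k)

/-- A Cantor set: a nonempty compact perfect nowhere dense subset of `ℝ`. -/
def IsCantorSet (C : Set ℝ) : Prop :=
  C.Nonempty ∧ IsCompact C ∧ Perfect C ∧ interior C = ∅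

/-- A Cantorval: a nonempty compact set equal to the closure of its interior such that
both endpoints of every nontrivial connected component are accumulation points of
trivial (one-point) components. -/
def IsCantorval (P : Set ℝ) : Prop :=
  P.Nonempty ∧ IsCompact P ∧ P = closure (interior P) ∧
  ∀ x ∈ P, (connectedComponentIn P x).Nontrivial →
    ∀ y ∈ ({sInf (connectedComponentIn P x), sSup (connectedComponentIn P x)} : Set ℝ),
      ∀ ε > 0, ∃ z ∈ P, z ≠ y ∧ |z - y| < ε ∧ connectedComponentIn P z = {z}

/-- The algebraic sum of k copies of D (the empty sum being {0}). -/
def sumN (D : Set ℝ) : ℕ → Set ℝ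
  | 0 => {0}
  | n + 1 => sumN D n + D

/-! ### Cantorvals and gaps -/

open Filter Topology

/-- `z` is two-sidedly approached by points outside `P`. -/
def GapPt (P : Set ℝ) (z : ℝ) : Prop :=
  (∀ δ > 0, ∃ y ∈ Ioo z (z + δ), y ∉ P) ∧ (∀ δ > 0, ∃ y ∈ Ioo (z - δ) z, y ∉ P)

lemma GapPt.component {P : Set ℝ} {z : ℝ} (hz : z ∈ P) (h : GapPt P z) :
    connectedComponentIn P z = {z} := by
  have hmem := mem_connectedComponentIn hz
  have hsub := connectedComponentIn_subset P z
  have hoc := (isPreconnected_connectedComponentIn (x := z) (F := P)).ordConnected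
  refine Subset.antisymm (fun w hw => ?_) (by simpa using hmem)
  rcases lt_trichotomy w z with hlt | heq | hlt
  · obtain ⟨y, hy, hyP⟩ := h.2 (z - w) (by linarith)
    exact absurd (hsub (hoc.out hw hmem ⟨by linarith [hy.1], hy.2.le⟩)) hyP
  · exact heq
  · obtain ⟨y, hy, hyP⟩ := h.1 (w - z) (by linarith)
    exact absurd (hsub (hoc.out hmem hw ⟨hy.1.le, by linarith [hy.2]⟩)) hyP

/-- Right endpoints `v` of nontrivial components are accumulation points of trivial ones: there are
gaps just above `v`, and the right endpoint of such a gap is itself followed by further gaps. -/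
lemma exists_gapPt_right {P : Set ℝ} (hcl : IsClosed P)
    (hgap : ∀ α β, α < β → (∀ y ∈ Ioo α β, y ∉ P) → ∀ δ > 0, ∃ y ∈ Ioo β (β + δ), y ∉ P)
    (hgap' : ∀ α β, α < β → (∀ y ∈ Ioo α β, y ∉ P) → ∀ δ > 0, ∃ y ∈ Ioo (α - δ) α, y ∉ P)
    {u v : ℝ} (huv : u < v) (hsub : Icc u v ⊆ P) (hv : ∀ z > v, ∃ y ∈ Ioo v z, y ∉ P)
    {ε : ℝ} (hε : 0 < ε) : ∃ z ∈ P, v < z ∧ z < v + ε ∧ GapPt P z := by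
  obtain ⟨w, hw, hwP⟩ : ∃ w ∈ Ioo v (v + ε), w ∈ P := by
    by_contra! hno
    obtain ⟨y, hy, hyP⟩ := hgap' v (v + ε) (by linarith) hno (v - u) (by linarith)
    exact hyP (hsub ⟨by linarith [hy.1], hy.2.le⟩)
  obtain ⟨y, hy, hyP⟩ := hv w hw.1
  set B := P ∩ Ici y with hB
  have hBc : IsClosed B := hcl.inter isClosed_Ici
  have hBb : BddBelow B := ⟨y, fun _ h => h.2⟩
  have hwB : w ∈ B := ⟨hwP, hy.2.le⟩
  have hβ : sInf B ∈ B := hBc.csInf_mem ⟨w, hwB⟩ hBb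
  have hβw : sInf B ≤ w := csInf_le hBb hwB
  have hyβ : y < sInf B := lt_of_le_of_ne hβ.2 (fun h => hyP (h ▸ hβ.1))
  have hempty : ∀ x ∈ Ico y (sInf B), x ∉ P := fun x hx hxP =>
    absurd (csInf_le hBb ⟨hxP, hx.1⟩) (not_le.2 hx.2)
  refine ⟨sInf B, hβ.1, by linarith [hy.1], by linarith [hw.2], ?_, fun δ hδ => ?_⟩
  · exact hgap y _ hyβ (fun x hx => hempty x ⟨hx.1.le, hx.2⟩)
  · refine ⟨max y (sInf B - δ / 2), ⟨?_, ?_⟩, hempty _ ⟨le_max_left _ _, ?_⟩⟩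
    · exact lt_of_lt_of_le (by linarith) (le_max_right _ _)
    · exact max_lt hyβ (by linarith)
    · exact max_lt hyβ (by linarith)

/-- A symmetric regular closed set in which every gap is followed, on the right of its right
endpoint, by arbitrarily close further gaps is a Cantorval. -/
lemma isCantorval_of_gaps {P : Set ℝ} {M : ℝ} (hne : P.Nonempty) (hc : IsCompact P)
    (hreg : P = closure (interior P)) (hsymm : ∀ x ∈ P, M - x ∈ P)
    (hgap : ∀ α β, α < β → (∀ y ∈ Ioo α β, y ∉ P) → ∀ δ > 0, ∃ y ∈ Ioo β (β + δ), y ∉ P) :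
    IsCantorval P := by
  have hsymm' : ∀ x, x ∉ P → M - x ∉ P := fun x hx h => hx (by simpa using hsymm _ h)
  have hgap' : ∀ α β, α < β → (∀ y ∈ Ioo α β, y ∉ P) →
      ∀ δ > 0, ∃ y ∈ Ioo (α - δ) α, y ∉ P := by
    intro α β hαβ h δ hδ
    obtain ⟨y, hy, hyP⟩ := hgap (M - β) (M - α) (by linarith)
      (fun y hy hyP => h (M - y) ⟨by linarith [hy.2], by linarith [hy.1]⟩ (hsymm _ hyP)) δ hδ
    exact ⟨M - y, ⟨by linarith [hy.2], by linarith [hy.1]⟩, hsymm' _ hyP⟩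
  refine ⟨hne, hc, hreg, fun x hx hnt y hy ε hε => ?_⟩
  set K := connectedComponentIn P x with hK
  have hKsub : K ⊆ P := connectedComponentIn_subset P x
  have hKpre : IsPreconnected K := isPreconnected_connectedComponentIn
  have hoc := hKpre.ordConnected
  have hmax : ∀ a b, a ∈ K → uIcc a b ⊆ P → b ∈ K := by
    intro a b ha hab
    have h1 : IsPreconnected (K ∪ uIcc a b) :=
      hKpre.union a ha left_mem_uIcc isPreconnected_uIcc
    exact h1.subset_connectedComponentIn (Or.inl (mem_connectedComponentIn hx))
      (union_subset hKsub hab) (Or.inr right_mem_uIcc)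
  have hba : BddAbove K := hc.bddAbove.mono hKsub
  have hbb : BddBelow K := hc.bddBelow.mono hKsub
  obtain ⟨p, hp, q, hq, hpq⟩ : ∃ p ∈ K, ∃ q ∈ K, p < q := hnt.exists_lt
  have hKne : K.Nonempty := ⟨p, hp⟩
  have hclK : closure K ⊆ P := closure_minimal hKsub hc.isClosed
  have hsupP : sSup K ∈ P := hclK (csSup_mem_closure hKne hba)
  have hinfP : sInf K ∈ P := hclK (csInf_mem_closure hKne hbb)
  have hqs : q ≤ sSup K := le_csSup hba hq
  have hsp : sInf K ≤ p := csInf_le hbb hp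
  have hup : ∀ a ∈ K, Icc a (sSup K) ⊆ P := by
    intro a ha t ht
    rcases ht.2.lt_or_eq with h | h
    · obtain ⟨b, hb, htb⟩ := exists_lt_of_lt_csSup hKne h
      exact hKsub (hoc.out ha hb ⟨ht.1, htb.le⟩)
    · exact h ▸ hsupP
  have hdown : ∀ a ∈ K, Icc (sInf K) a ⊆ P := by
    intro a ha t ht
    rcases ht.1.lt_or_eq with h | h
    · obtain ⟨b, hb, htb⟩ := exists_lt_of_csInf_lt hKne h
      exact hKsub (hoc.out hb ha ⟨htb.le, ht.2⟩)
    · exact h ▸ hinfP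
  rcases hy with rfl | rfl
  · have hends : ∀ z > M - sInf K, ∃ y ∈ Ioo (M - sInf K) z, y ∉ P := by
      intro z hz
      by_contra! hno
      have hmem : (sInf K + (M - z)) / 2 ∈ K := by
        refine hmax p _ hp ?_
        rw [uIcc_of_ge (by linarith)]
        intro t ht
        rcases lt_or_ge t (sInf K) with h | h
        · have := hsymm _ (hno (M - t) ⟨by linarith, by linarith [ht.1]⟩)
          simpa using this
        · exact hdown p hp ⟨h, ht.2⟩
      have := csInf_le hbb hmem
      linarith
    have hsub : Icc (M - q) (M - sInf K) ⊆ P := by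
      intro t ht
      have := hsymm _ (hdown q hq (show M - t ∈ _ from ⟨by linarith [ht.2], by linarith [ht.1]⟩))
      simpa using this
    obtain ⟨z, hzP, h1, h2, h3⟩ := exists_gapPt_right hc.isClosed hgap hgap'
      (by linarith) hsub hends hε
    refine ⟨M - z, hsymm _ hzP, by linarith, by rw [abs_lt]; constructor <;> linarith,
      GapPt.component (hsymm _ hzP) ⟨fun δ hδ => ?_, fun δ hδ => ?_⟩⟩
    · obtain ⟨y, hy, hyP⟩ := h3.2 δ hδ
      exact ⟨M - y, ⟨by linarith [hy.2], by linarith [hy.1]⟩, hsymm' _ hyP⟩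
    · obtain ⟨y, hy, hyP⟩ := h3.1 δ hδ
      exact ⟨M - y, ⟨by linarith [hy.2], by linarith [hy.1]⟩, hsymm' _ hyP⟩
  · have hends : ∀ z > sSup K, ∃ y ∈ Ioo (sSup K) z, y ∉ P := by
      intro z hz
      by_contra! hno
      have hmem : (sSup K + z) / 2 ∈ K := by
        refine hmax p _ hp ?_
        rw [uIcc_of_le (by linarith)]
        intro t ht
        rcases le_or_gt t (sSup K) with h | h
        · exact hup p hp ⟨ht.1, h⟩
        · exact hno t ⟨h, by linarith [ht.2]⟩
      have := le_csSup hba hmem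
      linarith
    obtain ⟨z, hzP, h1, h2, h3⟩ := exists_gapPt_right hc.isClosed hgap hgap'
      (hpq.trans_le hqs) (hup p hp) hends hε
    exact ⟨z, hzP, h1.ne', by rw [abs_lt]; constructor <;> linarith, h3.component hzP⟩

/-! ### Sets of digit sums -/

/-- The set of all sums `∑ y j` with digits `y j ∈ E j`. -/
def digitSums (E : ℕ → Set ℝ) : Set ℝ :=
  {x | ∃ y : ℕ → ℝ, (∀ j, y j ∈ E j) ∧ HasSum y x}

/-- A sequence of finite sets `E j ⊆ [0, R j - R (j + 1)]`, each containing both endpoints and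
symmetric about the midpoint. Thus `R n` is the largest sum of digits with indices `≥ n`. -/
structure DigitSys (E : ℕ → Set ℝ) (R : ℕ → ℝ) : Prop where
  fin : ∀ j, (E j).Finite
  zero : ∀ j, 0 ∈ E j
  nonneg : ∀ j, ∀ x ∈ E j, 0 ≤ x
  symm : ∀ j, ∀ x ∈ E j, R j - R (j + 1) - x ∈ E j
  strict : ∀ j, R (j + 1) < R j
  lim : Tendsto R atTop (𝓝 0)

lemma hasSum_telescope {R : ℕ → ℝ} (hR : Antitone R) (hlim : Tendsto R atTop (𝓝 0)) :
    HasSum (fun j => R j - R (j + 1)) (R 0) := by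
  rw [hasSum_iff_tendsto_nat_of_nonneg (fun i => sub_nonneg.2 (hR (Nat.le_succ i)))]
  simp only [Finset.sum_range_sub']
  simpa using hlim.const_sub (R 0)

namespace DigitSys

variable {E : ℕ → Set ℝ} {R : ℕ → ℝ}

lemma shift (h : DigitSys E R) (n : ℕ) :
    DigitSys (fun j => E (j + n)) (fun j => R (j + n)) where
  fin j := h.fin _
  zero j := h.zero _
  nonneg j := h.nonneg _
  symm j x hx := by
    have := h.symm _ x hx
    rwa [show j + n + 1 = j + 1 + n by ring] at this
  strict j := by
    have := h.strict (j + n)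
    rwa [show j + n + 1 = j + 1 + n by ring] at this
  lim := (tendsto_add_atTop_iff_nat n).2 h.lim

lemma le (h : DigitSys E R) {j : ℕ} {x : ℝ} (hx : x ∈ E j) : x ≤ R j - R (j + 1) := by
  have := h.nonneg _ _ (h.symm j x hx); linarith

lemma anti (h : DigitSys E R) : StrictAnti R := strictAnti_nat_of_succ_lt h.strict

lemma pos (h : DigitSys E R) (n : ℕ) : 0 < R n :=
  (h.anti.antitone.le_of_tendsto h.lim (n + 1)).trans_lt (h.strict n)

lemma hasSum (h : DigitSys E R) : HasSum (fun j => R j - R (j + 1)) (R 0) :=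
  hasSum_telescope h.anti.antitone h.lim

lemma summable (h : DigitSys E R) {y : ℕ → ℝ} (hy : ∀ j, y j ∈ E j) : Summable y :=
  Summable.of_nonneg_of_le (fun j => h.nonneg j _ (hy j)) (fun j => h.le (hy j)) h.hasSum.summable

lemma subset (h : DigitSys E R) : digitSums E ⊆ Icc 0 (R 0) := by
  rintro x ⟨y, hy, hs⟩
  exact ⟨hs.nonneg fun j => h.nonneg j _ (hy j), hasSum_le (fun j => h.le (hy j)) hs h.hasSum⟩

lemma tail_subset (h : DigitSys E R) (n : ℕ) :
    digitSums (fun j => E (j + n)) ⊆ Icc 0 (R n) := by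
  simpa using (h.shift n).subset

/-- Removing the first `n` digits leaves a point of the `n`-th tail set. -/
lemma split {y : ℕ → ℝ} (hy : ∀ j, y j ∈ E j) {x : ℝ} (hs : HasSum y x) (n : ℕ) :
    x - ∑ i ∈ Finset.range n, y i ∈ digitSums (fun j => E (j + n)) :=
  ⟨fun j => y (j + n), fun _ => hy _, (hasSum_nat_add_iff' n).2 hs⟩

lemma glue {y : ℕ → ℝ} {n : ℕ} (hy : ∀ j < n, y j ∈ E j) {τ : ℝ}
    (hτ : τ ∈ digitSums (fun j => E (j + n))) :
    ∑ i ∈ Finset.range n, y i + τ ∈ digitSums E := by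
  obtain ⟨w, hw, hs⟩ := hτ
  refine ⟨fun j => if j < n then y j else w (j - n), fun j => ?_, ?_⟩
  · by_cases hj : j < n
    · simpa [hj] using hy j hj
    · have : w (j - n) ∈ E (j - n + n) := hw (j - n)
      simp only [hj, if_false]
      rwa [Nat.sub_add_cancel (not_lt.1 hj)] at this
  · rw [← hasSum_nat_add_iff' n]
    have h1 : ∑ i ∈ Finset.range n, (if i < n then y i else w (i - n))
        = ∑ i ∈ Finset.range n, y i :=
      Finset.sum_congr rfl fun i hi => by simp [Finset.mem_range.1 hi]
    rw [h1]
    simpa using hs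

lemma zero_mem (h : DigitSys E R) : (0 : ℝ) ∈ digitSums E :=
  ⟨fun _ => 0, h.zero, hasSum_zero⟩

lemma symm_mem (h : DigitSys E R) {x : ℝ} (hx : x ∈ digitSums E) : R 0 - x ∈ digitSums E := by
  obtain ⟨y, hy, hs⟩ := hx
  exact ⟨fun j => R j - R (j + 1) - y j, fun j => h.symm j _ (hy j), h.hasSum.sub hs⟩

lemma isCompact (h : DigitSys E R) : IsCompact (digitSums E) := by
  have h1 : IsCompact (univ.pi E) := isCompact_univ_pi fun j => (h.fin j).isCompact
  have h2 : ContinuousOn (fun y : ℕ → ℝ => ∑' j, y j) (univ.pi E) := by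
    refine continuousOn_tsum (fun j => (continuous_apply j).continuousOn) h.hasSum.summable ?_
    intro j y hy
    rw [Real.norm_of_nonneg (h.nonneg j _ (hy j trivial))]
    exact h.le (hy j trivial)
  convert h1.image_of_continuousOn h2 using 1
  ext x
  constructor
  · rintro ⟨y, hy, hs⟩
    exact ⟨y, fun j _ => hy j, hs.tsum_eq⟩
  · rintro ⟨y, hy, rfl⟩
    exact ⟨y, fun j => hy j trivial, (h.summable fun j => hy j trivial).hasSum⟩

/-- Changing one far digit moves a digit sum by a small nonzero amount. -/
lemma perfect (h : DigitSys E R) : Perfect (digitSums E) := by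
  refine ⟨h.isCompact.isClosed, fun x hx => ?_⟩
  rw [accPt_iff_nhds]
  intro U hU
  obtain ⟨ε, hε, hball⟩ := Metric.mem_nhds_iff.1 hU
  obtain ⟨n, hn⟩ := (h.lim.eventually (gt_mem_nhds hε)).exists
  obtain ⟨y, hy, hs⟩ := hx
  obtain ⟨e, he, hne⟩ : ∃ e ∈ E n, e ≠ y n := by
    by_cases h0 : y n = 0
    · refine ⟨R n - R (n + 1), by simpa using h.symm n 0 (h.zero n), ?_⟩
      have := h.strict n
      rw [h0]; linarith
    · exact ⟨0, h.zero n, Ne.symm h0⟩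
  refine ⟨x + (e - y n), ⟨hball ?_, Function.update y n e, fun j => ?_, ?_⟩, ?_⟩
  · have h1 := h.le he
    have h2 := h.le (hy n)
    have h3 := h.nonneg _ _ he
    have h4 := h.nonneg _ _ (hy n)
    have h5 := h.pos (n + 1)
    rw [Metric.mem_ball, Real.dist_eq, abs_lt]
    constructor <;> linarith
  · by_cases hj : j = n
    · subst hj; simpa using he
    · simpa [hj] using hy j
  · have := hs.update n e
    rwa [show e - y n + x = x + (e - y n) by ring] at this
  · intro hh
    apply hne
    linarith

lemma isCantorSet (h : DigitSys E R) (hv : volume (digitSums E) = 0) :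
    IsCantorSet (digitSums E) :=
  ⟨⟨0, h.zero_mem⟩, h.isCompact, h.perfect, Measure.interior_eq_empty_of_null hv⟩

lemma volume_le (h : DigitSys E R) (n : ℕ) : volume (digitSums (fun j => E (j + n))) ≤
    (E n).ncard * volume (digitSums (fun j => E (j + (n + 1)))) := by
  have hsub : digitSums (fun j => E (j + n)) ⊆
      ⋃ e ∈ (h.fin n).toFinset, (fun x => e + x) '' digitSums (fun j => E (j + (n + 1))) := by
    rintro x ⟨y, hy, hs⟩
    have h1 := split hy hs 1
    refine mem_iUnion₂.2 ⟨y 0, by simpa using hy 0, x - y 0, ?_, by simp⟩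
    simpa [add_assoc, add_comm 1 n] using h1
  refine (measure_mono hsub).trans ((measure_biUnion_finset_le _ _).trans ?_)
  simp [Set.ncard_eq_toFinset_card _ (h.fin n)]

/-- If the `j`-th digit set has at most `N j / 2` elements, where `δ j = N j * δ (j + 1)` and
`R` is comparable to `δ`, then covering at finer and finer levels shows that the digit sums
are a null set. -/
lemma volume_eq_zero (h : DigitSys E R) {δ N : ℕ → ℝ} {C : ℝ} (hδ : ∀ j, 0 < δ j)
    (hN : ∀ j, δ j = N j * δ (j + 1)) (hR : ∀ j, R j ≤ C * δ j) {n₀ : ℕ}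
    (hcard : ∀ j ≥ n₀, 2 * ((E j).ncard : ℝ) ≤ N j) : volume (digitSums E) = 0 := by
  have hC : 0 ≤ C := by
    have := h.pos 0
    have := hR 0
    have := hδ 0
    by_contra hc
    nlinarith
  have key : ∀ i n, n₀ ≤ n → volume (digitSums (fun j => E (j + n))) ≤
      ENNReal.ofReal (C * δ n * (1 / 2) ^ i) := by
    intro i
    induction i with
    | zero =>
      intro n _
      refine (measure_mono (h.tail_subset n)).trans ?_
      rw [Real.volume_Icc]
      exact ENNReal.ofReal_le_ofReal (by simpa using hR n)
    | succ i ih =>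
      intro n hn
      refine (h.volume_le n).trans ?_
      refine (mul_le_mul_right (ih (n + 1) (by omega)) _).trans ?_
      rw [← ENNReal.ofReal_natCast, ← ENNReal.ofReal_mul (by positivity)]
      refine ENNReal.ofReal_le_ofReal ?_
      have h1 := hcard n hn
      have h2 : 0 ≤ C * δ (n + 1) * (1 / 2) ^ (i + 1) :=
        mul_nonneg (mul_nonneg hC (hδ _).le) (by positivity)
      have h3 := mul_le_mul_of_nonneg_right h1 h2
      rw [hN n]
      calc _ = 2 * ((E n).ncard : ℝ) * (C * δ (n + 1) * (1 / 2) ^ (i + 1)) := by ring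
        _ ≤ _ := h3
        _ = _ := by ring
  have hzero : volume (digitSums (fun j => E (j + n₀))) = 0 := by
    have ht : Tendsto (fun i : ℕ => ENNReal.ofReal (C * δ n₀ * (1 / 2) ^ i)) atTop (𝓝 0) := by
      have := (tendsto_pow_atTop_nhds_zero_of_lt_one (r := (1 / 2 : ℝ)) (by norm_num)
        (by norm_num)).const_mul (C * δ n₀)
      simpa using ENNReal.tendsto_ofReal this
    exact le_antisymm (ge_of_tendsto' ht fun i => key i n₀ le_rfl) bot_le
  have hdown : ∀ n, volume (digitSums (fun j => E (j + n))) = 0 →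
      volume (digitSums (fun j => E (j + 0))) = 0 := by
    intro n
    induction n with
    | zero => exact id
    | succ n ih =>
      intro hn
      refine ih (le_antisymm ((h.volume_le n).trans ?_) bot_le)
      rw [hn, mul_zero]
  exact hdown n₀ hzero

/-- Suppose the nonzero digits of index `j` are at least `γ j`, with `γ` antitone. If infinitely
often `R (j + 1) < γ j`, then digit sums have gaps `(R (j + 1), γ j)` accumulating at `0`, and such
gaps reappear to the right of every right endpoint `β` of a gap, because near `β` the digit sums
look like `β` plus a tail set. -/
lemma gap (h : DigitSys E R) {γ : ℕ → ℝ} (hγ : Antitone γ)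
    (hE : ∀ j, ∀ x ∈ E j, x ≠ 0 → γ j ≤ x) (hfreq : ∃ᶠ j in atTop, R (j + 1) < γ j)
    {α β : ℝ} (hαβ : α < β) (hgap : ∀ y ∈ Ioo α β, y ∉ digitSums E) {δ : ℝ} (hδ : 0 < δ) :
    ∃ y ∈ Ioo β (β + δ), y ∉ digitSums E := by
  obtain ⟨J, hJ⟩ := (h.lim.eventually (gt_mem_nhds (sub_pos.2 hαβ))).exists
  -- the finitely many partial sums over the first `J` digits stay away from `β` on the right
  have hfin : ((fun y : ℕ → ℝ => ∑ i ∈ Finset.range J, y i) '' (univ.pi E)).Finite := by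
    have h1 : ((fun z : Fin J → ℝ => ∑ i, z i) '' (univ.pi fun i : Fin J => E i)).Finite :=
      (Set.Finite.pi (ι := Fin J) (t := fun i => E i) fun i => h.fin i).image _
    refine h1.subset ?_
    rintro _ ⟨y, hy, rfl⟩
    exact ⟨fun i => y i, fun i _ => hy i trivial, (Finset.sum_range _).symm⟩
  obtain ⟨η, hη, hηF⟩ : ∃ η > 0, ∀ y : ℕ → ℝ, (∀ j, y j ∈ E j) →
      β < ∑ i ∈ Finset.range J, y i → β + η ≤ ∑ i ∈ Finset.range J, y i := by
    have hcl := (hfin.subset (inter_subset_left (t := Ioi β))).isClosed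
    have hb : β ∈ ((fun y : ℕ → ℝ => ∑ i ∈ Finset.range J, y i) '' (univ.pi E) ∩ Ioi β)ᶜ :=
      fun hh => lt_irrefl β hh.2
    obtain ⟨η, hη, hball⟩ := Metric.isOpen_iff.1 hcl.isOpen_compl β hb
    refine ⟨η, hη, fun y hy hlt => ?_⟩
    by_contra! hcon
    refine hball (?_ : ∑ i ∈ Finset.range J, y i ∈ _) ⟨⟨y, fun j _ => hy j, rfl⟩, hlt⟩
    rw [Metric.mem_ball, Real.dist_eq, abs_lt]
    constructor <;> linarith
  have hlim := h.lim.eventually (gt_mem_nhds (lt_min hδ hη))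
  obtain ⟨j, hj, hjJ, hjs⟩ := (hfreq.and_eventually ((eventually_ge_atTop J).and hlim)).exists
  have hγR : γ j ≤ R j := by
    have h1 := h.strict j
    have h2 := hE j (R j - R (j + 1)) (by simpa using h.symm j 0 (h.zero j)) (by linarith)
    have := h.pos (j + 1)
    linarith
  have hjδ : R j < δ := hjs.trans_le (min_le_left _ _)
  have hjη : R j < η := hjs.trans_le (min_le_right _ _)
  have hRpos := h.pos (j + 1)
  refine ⟨β + (R (j + 1) + γ j) / 2, ⟨by linarith, by linarith⟩, ?_⟩
  rintro ⟨y, hy, hs⟩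
  have htail := h.tail_subset J (split hy hs J)
  have hfJ : ∑ i ∈ Finset.range J, y i ∈ digitSums E := by
    simpa using glue (n := J) (fun i _ => hy i) ((h.shift J).zero_mem)
  have hle : ∑ i ∈ Finset.range J, y i ≤ β := by
    by_contra! hlt
    have := hηF y hy hlt
    linarith [htail.1]
  have heq : ∑ i ∈ Finset.range J, y i = β := by
    refine hle.eq_or_lt.resolve_right fun hlt => hgap _ ⟨?_, hlt⟩ hfJ
    linarith [htail.2]
  have hmid : ∀ i ∈ Finset.Ico J (j + 1), y i = 0 := by
    intro i hi
    rw [Finset.mem_Ico] at hi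
    by_contra hne
    have h1 := hE i _ (hy i) hne
    have h2 : γ j ≤ γ i := hγ (by omega)
    have h3 := sum_le_hasSum (Finset.range (i + 1)) (fun k _ => h.nonneg k _ (hy k)) hs
    have h4 : ∑ k ∈ Finset.range J, y k + y i ≤ ∑ k ∈ Finset.range (i + 1), y k := by
      rw [Finset.sum_range_succ]
      gcongr ?_ + _
      refine Finset.sum_le_sum_of_subset_of_nonneg ?_ (fun k _ _ => h.nonneg k _ (hy k))
      exact Finset.range_mono hi.1
    linarith
  have hsum : ∑ i ∈ Finset.range (j + 1), y i = β := by
    rw [← Finset.sum_range_add_sum_Ico _ (show J ≤ j + 1 by omega), Finset.sum_eq_zero hmid, heq,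
      add_zero]
  have := (h.tail_subset (j + 1) (split hy hs (j + 1))).2
  rw [hsum] at this
  linarith

/-- Gaps accumulating at the right of every gap come from `gap`; the set is regular closed because
every digit sum is approximated by translates of the tail sets, which have interior points. -/
lemma isCantorval (h : DigitSys E R) {γ : ℕ → ℝ} (hγ : Antitone γ)
    (hE : ∀ j, ∀ x ∈ E j, x ≠ 0 → γ j ≤ x) (hfreq : ∃ᶠ j in atTop, R (j + 1) < γ j)
    (hinter : ∀ n, (interior (digitSums (fun j => E (j + n)))).Nonempty) :
    IsCantorval (digitSums E) := by
  refine isCantorval_of_gaps ⟨0, h.zero_mem⟩ h.isCompact ?_ (fun x hx => h.symm_mem hx)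
    (fun α β hαβ hg δ hδ => h.gap hγ hE hfreq hαβ hg hδ)
  refine Subset.antisymm ?_ (closure_minimal interior_subset h.isCompact.isClosed)
  rintro x ⟨y, hy, hs⟩
  rw [Metric.mem_closure_iff]
  intro ε hε
  obtain ⟨n, hn⟩ := (h.lim.eventually (gt_mem_nhds hε)).exists
  obtain ⟨τ, hτ⟩ := hinter n
  set f := ∑ i ∈ Finset.range n, y i
  refine ⟨f + τ, ?_, ?_⟩
  · have h1 : (fun t => -f + t) ⁻¹' interior (digitSums (fun j => E (j + n))) ⊆ digitSums E := by
      intro t ht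
      have := glue (n := n) (fun i _ => hy i) (interior_subset ht)
      simpa [f] using this
    exact interior_maximal h1 (isOpen_interior.preimage (by fun_prop)) (by simpa using hτ)
  · have h1 := h.tail_subset n (interior_subset hτ)
    have h2 := h.tail_subset n (split hy hs n)
    rw [Real.dist_eq, abs_lt]
    constructor <;> linarith [h1.1, h1.2, h2.1, h2.2]

end DigitSys

/-- Greedy expansion: if at each step a digit from `D j` brings a remainder in `[0, r j]` down to
`[0, r (j + 1)]`, then every point of `[0, r 0]` is a digit sum. -/
lemma greedy {D : ℕ → Set ℝ} {r : ℕ → ℝ} (hlim : Tendsto r atTop (𝓝 0))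
    (hstep : ∀ j, ∀ x ∈ Icc 0 (r j), ∃ e ∈ D j, x - e ∈ Icc 0 (r (j + 1)))
    (hD : ∀ j, ∀ e ∈ D j, 0 ≤ e) : Icc 0 (r 0) ⊆ digitSums D := by
  intro x hx
  choose! e heD her using hstep
  let z : ℕ → ℝ := fun n => Nat.rec x (fun j t => t - e j t) n
  have hz : ∀ n, z n ∈ Icc 0 (r n) := by
    intro n
    induction n with
    | zero => exact hx
    | succ n ih => exact her n _ ih
  have hsum : ∀ n, ∑ i ∈ Finset.range n, e i (z i) = x - z n := by
    intro n
    induction n with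
    | zero => simp [z]
    | succ n ih =>
      rw [Finset.sum_range_succ, ih]
      change x - z n + e n (z n) = x - (z n - e n (z n))
      ring
  refine ⟨fun j => e j (z j), fun j => heD j _ (hz j), ?_⟩
  rw [hasSum_iff_tendsto_nat_of_nonneg (fun j => hD j _ (heD j _ (hz j)))]
  simp only [hsum]
  have : Tendsto z atTop (𝓝 0) := squeeze_zero (fun n => (hz n).1) (fun n => (hz n).2) hlim
  simpa using this.const_sub x

/-! ### Algebraic sums of achievement sets -/

/-- Algebraic sums of an achievement set: allow multiplicities up to `k`. -/
lemma sumN_achievementSet {a : ℕ → ℝ} (ha : ∀ i, 0 ≤ a i) (hs : Summable a) (k : ℕ) :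
    sumN (achievementSet a) k =
      {x | ∃ c : ℕ → ℕ, (∀ i, c i ≤ k) ∧ HasSum (fun i => c i * a i) x} := by
  have hsc : ∀ {c : ℕ → ℕ} {K : ℕ}, (∀ i, c i ≤ K) → Summable (fun i => c i * a i) := by
    intro c K hc
    refine Summable.of_nonneg_of_le (fun i => mul_nonneg (Nat.cast_nonneg _) (ha i))
      (fun i => ?_) (hs.mul_left (K : ℝ))
    exact mul_le_mul_of_nonneg_right (by exact_mod_cast hc i) (ha i)
  induction k with
  | zero =>
    ext x
    simp only [sumN, mem_singleton_iff, mem_ofPred_eq]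
    constructor
    · rintro rfl
      exact ⟨fun _ => 0, fun _ => le_rfl, by simp⟩
    · rintro ⟨c, hc, hx⟩
      have : (fun i => (c i : ℝ) * a i) = fun _ => 0 := by
        funext i; simp [Nat.le_zero.1 (hc i)]
      rw [this] at hx
      exact hx.unique hasSum_zero
  | succ k ih =>
    ext x
    simp only [sumN, ih, Set.mem_add, mem_ofPred_eq]
    constructor
    · rintro ⟨u, ⟨c, hc, hu⟩, v, ⟨I, hv⟩, rfl⟩
      classical
      refine ⟨fun i => c i + if i ∈ I then 1 else 0, fun i => ?_, ?_⟩
      · have := hc i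
        dsimp only
        split_ifs <;> omega
      · have hv' : HasSum (I.indicator a) v := hasSum_subtype_iff_indicator.1 hv
        convert hu.add hv' using 2 with i
        by_cases hi : i ∈ I <;> simp [hi, add_mul]
    · rintro ⟨c, hc, hx⟩
      have hc1 : ∀ i, min (c i) k ≤ k := fun i => min_le_right _ _
      have h1 := (hsc hc1).hasSum
      refine ⟨_, ⟨_, hc1, h1⟩, _, ⟨{i | k < c i}, hasSum_subtype_iff_indicator.2 ?_⟩,
        add_sub_cancel _ x⟩
      suffices hfun : {i | k < c i}.indicator a =
          fun i => (c i : ℝ) * a i - ((min (c i) k : ℕ) : ℝ) * a i by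
        rw [hfun]
        exact hx.sub h1
      funext i
      have := hc i
      by_cases hi : k < c i
      · have h2 : c i = k + 1 := by omega
        simp [h2]
        ring
      · simp [hi, not_lt.1 hi]

/-- The `j`-th digit set of the `k`-fold sum, for a family `g` of terms arranged in finite
blocks. -/
def digits {β : ℕ → Type} [∀ j, Fintype (β j)] (g : (Σ j, β j) → ℝ) (k j : ℕ) : Set ℝ :=
  {x | ∃ c : β j → ℕ, (∀ i, c i ≤ k) ∧ x = ∑ i, c i * g ⟨j, i⟩}

lemma sumN_eq_digitSums {β : ℕ → Type} [∀ j, Fintype (β j)] {g : (Σ j, β j) → ℝ}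
    (hg : ∀ p, 0 ≤ g p) (hs : Summable g) (e : ℕ ≃ Σ j, β j) (k : ℕ) :
    sumN (achievementSet (g ∘ e)) k = digitSums (digits g k) := by
  rw [sumN_achievementSet (a := g ∘ e) (fun i => hg _) ((e.summable_iff (f := g)).2 hs)]
  ext x
  constructor
  · rintro ⟨c, hc, hx⟩
    have h1 : HasSum (fun p => (c (e.symm p) : ℝ) * g p) x := by
      rw [← e.hasSum_iff]
      simpa [Function.comp_def] using hx
    exact ⟨_, fun j => ⟨fun i => c (e.symm ⟨j, i⟩), fun i => hc _, rfl⟩,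
      h1.sigma fun j => hasSum_fintype _⟩
  · rintro ⟨y, hy, hx⟩
    choose c hc hyc using hy
    have hsum : Summable (fun p : Σ j, β j => (c p.1 p.2 : ℝ) * g p) := by
      refine Summable.of_nonneg_of_le (fun i => mul_nonneg (Nat.cast_nonneg _) (hg i))
        (fun i => ?_) (hs.mul_left (k : ℝ))
      exact mul_le_mul_of_nonneg_right (by exact_mod_cast hc _ _) (hg i)
    have h1 : HasSum (fun p : Σ j, β j => (c p.1 p.2 : ℝ) * g p) x := by
      refine HasSum.sigma_of_hasSum hx (fun j => ?_) hsum
      rw [hyc j]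
      exact hasSum_fintype _
    exact ⟨fun i => c (e i).1 (e i).2, fun i => hc _ _, (e.hasSum_iff).2 h1⟩

/-! ### Covering intervals by multiples -/

/-- If `A + [0, w]` covers `[0, L]` and `g ≤ L`, then adding up to `k` copies of `g` to the
elements of `A` extends the covered interval to `[0, L + k * g]`. -/
lemma cover_step {A : Set ℝ} {L w g : ℝ} (hL : g ≤ L)
    (hA : ∀ x ∈ Icc 0 L, ∃ e ∈ A, x - e ∈ Icc 0 w) (k : ℕ) :
    ∀ x ∈ Icc 0 (L + k * g), ∃ c ≤ k, ∃ e ∈ A, x - (e + (c : ℕ) * g) ∈ Icc 0 w := by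
  induction k with
  | zero =>
    intro x hx
    obtain ⟨e, he, hxe⟩ := hA x (by simpa using hx)
    exact ⟨0, le_rfl, e, he, by simpa using hxe⟩
  | succ k ih =>
    intro x hx
    push_cast at hx
    rcases le_or_gt x L with h | h
    · obtain ⟨e, he, hxe⟩ := hA x ⟨hx.1, h⟩
      exact ⟨0, Nat.zero_le _, e, he, by simpa using hxe⟩
    · obtain ⟨c, hc, e, he, hxe⟩ := ih (x - g) ⟨by linarith, by linarith [hx.2]⟩
      refine ⟨c + 1, by omega, e, he, ?_⟩
      push_cast
      convert hxe using 1
      ring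

/-- One step of the greedy expansion for a single block, at unit scale: with `t ≤ k * ρ` the digits
of the block form a `k * ρ`-net from below in `[0, k * ρ * (m + 1) ^ s]`. The terms are used in
increasing order, starting with the copies of `t`. -/
lemma unit_cover {m s k : ℕ} {ρ t : ℝ} (hm : 1 ≤ m) (hs : 1 ≤ s) (hmk : m ≤ k)
    (hρ : 1 / (m : ℝ) < ρ) (ht : 0 < t) (htk : t ≤ k * ρ)
    (htot : ρ * (((m : ℝ) + 1) ^ s - 1) = 2 * s * t + (((m : ℝ) + 1) ^ s - 1) / m) :
    ∀ x ∈ Icc 0 (k * ρ * ((m : ℝ) + 1) ^ s), ∃ c : ℕ → ℕ, (∀ i, c i ≤ k) ∧ ∃ d ≤ k * s,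
      x - (∑ i ∈ Finset.range s, c i * (t + ((m : ℝ) + 1) ^ i) + (d : ℕ) * t) ∈
        Icc 0 (k * ρ) := by
  have hm0 : (0 : ℝ) < m := by exact_mod_cast hm
  have hmk' : (m : ℝ) ≤ k := by exact_mod_cast hmk
  have hs' : (1 : ℝ) ≤ s := by exact_mod_cast hs
  have hmρ : 1 < m * ρ := by rwa [div_lt_iff₀' hm0] at hρ
  have hρ0 : 0 < ρ := by by_contra h; nlinarith
  have hkρ : 1 ≤ k * ρ := by nlinarith
  have hgeom : ∀ j, (m : ℝ) * ∑ i ∈ Finset.range j, ((m : ℝ) + 1) ^ i = ((m : ℝ) + 1) ^ j - 1 := by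
    intro j
    have := mul_geom_sum ((m : ℝ) + 1) j
    simpa using this
  have key : ∀ j, ∀ x ∈ Icc 0 (k * ρ + (k * s : ℕ) * t
      + k * ∑ i ∈ Finset.range j, (t + ((m : ℝ) + 1) ^ i)),
      ∃ c : ℕ → ℕ, (∀ i, c i ≤ k) ∧ ∃ d ≤ k * s,
      x - (∑ i ∈ Finset.range j, c i * (t + ((m : ℝ) + 1) ^ i) + (d : ℕ) * t) ∈
        Icc 0 (k * ρ) := by
    intro j
    induction j with
    | zero =>
      intro x hx
      obtain ⟨d, hd, e, he, hxe⟩ := cover_step (A := {0}) htk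
        (fun x hx => ⟨0, rfl, by simpa using hx⟩) (k * s) x (by simpa using hx)
      rw [mem_singleton_iff] at he
      subst he
      exact ⟨fun _ => 0, fun _ => Nat.zero_le _, d, hd, by simpa using hxe⟩
    | succ j ih =>
      intro x hx
      have hstep := cover_step (A := {e | ∃ c : ℕ → ℕ, (∀ i, c i ≤ k) ∧ ∃ d ≤ k * s,
          e = ∑ i ∈ Finset.range j, c i * (t + ((m : ℝ) + 1) ^ i) + (d : ℕ) * t})
        (L := k * ρ + (k * s : ℕ) * t + k * ∑ i ∈ Finset.range j, (t + ((m : ℝ) + 1) ^ i))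
        (w := k * ρ) (g := t + ((m : ℝ) + 1) ^ j) ?_ ?_ k x ?_
      · obtain ⟨c', hc', e, ⟨c, hc, d, hd, rfl⟩, hxe⟩ := hstep
        refine ⟨Function.update c j c', fun i => ?_, d, hd, ?_⟩
        · by_cases hi : i = j
          · subst hi; simpa using hc'
          · simpa [hi] using hc i
        · rw [Finset.sum_range_succ]
          have h1 : ∑ i ∈ Finset.range j, (Function.update c j c' i : ℝ) * (t + ((m : ℝ) + 1) ^ i)
              = ∑ i ∈ Finset.range j, (c i : ℝ) * (t + ((m : ℝ) + 1) ^ i) := by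
            refine Finset.sum_congr rfl fun i hi => ?_
            rw [Function.update_of_ne (Finset.mem_range.1 hi).ne]
          rw [h1, Function.update_self]
          convert hxe using 1
          ring
      · -- the copies of `t` dominate `t`, the smaller powers and `k * ρ` dominate the power
        have h1 : ∑ i ∈ Finset.range j, ((m : ℝ) + 1) ^ i ≤
            ∑ i ∈ Finset.range j, (t + ((m : ℝ) + 1) ^ i) :=
          Finset.sum_le_sum fun i _ => by linarith
        have h2 : 0 ≤ ∑ i ∈ Finset.range j, ((m : ℝ) + 1) ^ i :=
          Finset.sum_nonneg fun i _ => by positivity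
        have h3 := hgeom j
        have h4 : (m : ℝ) * ∑ i ∈ Finset.range j, ((m : ℝ) + 1) ^ i ≤
            k * ∑ i ∈ Finset.range j, (t + ((m : ℝ) + 1) ^ i) := by
          gcongr
        have h5 : (1 : ℝ) ≤ (k * s : ℕ) := by
          have : 1 ≤ k * s := Nat.mul_pos (by omega) hs
          exact_mod_cast this
        nlinarith
      · rintro x hx
        obtain ⟨c, hc, d, hd, h⟩ := ih x hx
        exact ⟨_, ⟨c, hc, d, hd, rfl⟩, h⟩
      · rw [Finset.sum_range_succ] at hx
        convert hx using 2
        ring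
  intro x hx
  refine key s x ⟨hx.1, hx.2.trans (le_of_eq ?_)⟩
  have h1 : ∑ i ∈ Finset.range s, ((m : ℝ) + 1) ^ i = (((m : ℝ) + 1) ^ s - 1) / m := by
    rw [eq_div_iff hm0.ne', mul_comm]; exact hgeom s
  rw [Finset.sum_add_distrib, h1]
  simp only [Finset.sum_const, Finset.card_range, nsmul_eq_mul]
  push_cast
  linear_combination (k : ℝ) * htot

lemma exists_decomp (k s d : ℕ) (hd : d ≤ k * s) :
    ∃ c : Fin s → ℕ, (∀ i, c i ≤ k) ∧ ∑ i, c i = d := by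
  induction s generalizing d with
  | zero => exact ⟨fun _ => 0, fun _ => Nat.zero_le _, by simp at hd ⊢; omega⟩
  | succ s ih =>
    have h2 : k * (s + 1) = k * s + k := by ring
    obtain ⟨c, hc, hs⟩ := ih (d - min d k) (by omega)
    refine ⟨Fin.cons (min d k) c, fun i => ?_, ?_⟩
    · refine Fin.cases ?_ (fun i => ?_) i
      · simp
      · simpa using hc i
    · rw [Fin.sum_cons, hs]; omega

/-! ### The block construction -/

namespace Blocks

/-- The ratio of the `j`-th and `(j + 1)`-st scales. -/
noncomputable def base (m s : ℕ → ℕ) (j : ℕ) : ℝ := ((m j : ℝ) + 1) ^ s j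

/-- The `j`-th scale; the terms of the `j`-th block are multiples of `scale m s (j + 1)`. -/
noncomputable def scale (m s : ℕ → ℕ) (j : ℕ) : ℝ := ∏ i ∈ Finset.range j, (base m s i)⁻¹

/-- The common shift of the terms of the `j`-th block, in units of `scale m s (j + 1)`. It is
chosen to make the sum of the block equal to `ρ * (scale m s j - scale m s (j + 1))`. -/
noncomputable def offset (m s : ℕ → ℕ) (ρ : ℝ) (j : ℕ) : ℝ :=
  (ρ - 1 / m j) * (base m s j - 1) / (2 * s j)

/-- The terms: the `j`-th block consists of `offset + (m j + 1) ^ i` for `i < s j` and of `s j`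
copies of `offset`, all multiplied by `scale m s (j + 1)`. -/
noncomputable def term (m s : ℕ → ℕ) (ρ : ℝ) (p : Σ j, Fin (s j) × Bool) : ℝ :=
  scale m s (p.1 + 1) *
    (offset m s ρ p.1 + if p.2.2 then ((m p.1 : ℝ) + 1) ^ (p.2.1 : ℕ) else 0)

/-- Admissible parameters. The last condition makes the `k`-fold digit sets small for
`k < m j`. -/
structure Good (m s : ℕ → ℕ) (ρ : ℝ) : Prop where
  hm : ∀ j, 1 ≤ m j
  hs : ∀ j, 1 ≤ s j
  hρ : ∀ j, 1 / (m j : ℝ) < ρ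
  card : ∀ j, 2 * (m j ^ s j * (m j * s j + 1)) ≤ (m j + 1) ^ s j

variable {m s : ℕ → ℕ} {ρ : ℝ}

namespace Good

lemma two_le_base (h : Good m s ρ) (j : ℕ) : 2 ≤ base m s j := by
  have h1 : (1 : ℝ) ≤ m j := by exact_mod_cast h.hm j
  calc (2 : ℝ) ≤ (m j : ℝ) + 1 := by linarith
    _ = ((m j : ℝ) + 1) ^ 1 := (pow_one _).symm
    _ ≤ _ := pow_le_pow_right₀ (by linarith) (h.hs j)

lemma scale_pos (h : Good m s ρ) (j : ℕ) : 0 < scale m s j :=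
  Finset.prod_pos fun i _ => inv_pos.2 (by linarith [h.two_le_base i])

lemma scale_succ (h : Good m s ρ) (j : ℕ) :
    scale m s j = base m s j * scale m s (j + 1) := by
  have := h.two_le_base j
  rw [scale, scale, Finset.prod_range_succ]
  field_simp

lemma scale_lim (h : Good m s ρ) : Tendsto (scale m s) atTop (𝓝 0) := by
  refine squeeze_zero (fun j => (h.scale_pos j).le) (g := fun j => (1 / 2 : ℝ) ^ j) (fun j => ?_)
    (tendsto_pow_atTop_nhds_zero_of_lt_one (by norm_num) (by norm_num))
  induction j with
  | zero => simp [scale]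
  | succ j ih =>
    have h1 := h.scale_succ j
    have h2 := h.two_le_base j
    have h3 := h.scale_pos (j + 1)
    rw [pow_succ]
    nlinarith

lemma m_pos (h : Good m s ρ) (j : ℕ) : (0 : ℝ) < m j := by exact_mod_cast h.hm j

lemma s_pos (h : Good m s ρ) (j : ℕ) : (0 : ℝ) < s j := by exact_mod_cast h.hs j

lemma ρ_pos (h : Good m s ρ) : 0 < ρ := lt_trans (one_div_pos.2 (h.m_pos 0)) (h.hρ 0)

lemma offset_pos (h : Good m s ρ) (j : ℕ) : 0 < offset m s ρ j := by
  have h1 := h.two_le_base j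
  have h2 := h.hρ j
  have h3 := h.s_pos j
  exact div_pos (mul_pos (by linarith) (by linarith)) (by linarith)

lemma total (h : Good m s ρ) (j : ℕ) : ρ * (base m s j - 1) =
    2 * s j * offset m s ρ j + (base m s j - 1) / m j := by
  have h1 := (h.s_pos j).ne'
  have h2 := (h.m_pos j).ne'
  rw [offset]
  field_simp
  ring

lemma term_pos (h : Good m s ρ) (p) : 0 < term m s ρ p := by
  refine mul_pos (h.scale_pos _) (add_pos_of_pos_of_nonneg (h.offset_pos _) ?_)
  split_ifs
  · positivity
  · exact le_rfl

/-- By the choice of the offset the block sums telescope, so the terms after block `j` add up to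
`ρ * scale m s (j + 1)`. -/
lemma sum_block (h : Good m s ρ) (j : ℕ) :
    ∑ i, term m s ρ ⟨j, i⟩ = ρ * (scale m s j - scale m s (j + 1)) := by
  have h1 : (∑ i : Fin (s j), ((m j : ℝ) + 1) ^ (i : ℕ)) = (base m s j - 1) / m j := by
    rw [Fin.sum_univ_eq_sum_range (fun i => ((m j : ℝ) + 1) ^ i) (s j),
      eq_div_iff (h.m_pos j).ne', mul_comm]
    have := mul_geom_sum ((m j : ℝ) + 1) (s j)
    simpa [base] using this
  rw [Fintype.sum_prod_type]
  simp only [term, Fintype.sum_bool, if_true, Bool.false_eq_true, if_false]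
  rw [h.scale_succ j]
  have h2 : ∀ i : Fin (s j), scale m s (j + 1) * (offset m s ρ j + ((m j : ℝ) + 1) ^ (i : ℕ)) +
      scale m s (j + 1) * (offset m s ρ j + 0) =
      scale m s (j + 1) * (2 * offset m s ρ j) + scale m s (j + 1) * ((m j : ℝ) + 1) ^ (i : ℕ) :=
    fun i => by ring
  simp only [h2, Finset.sum_add_distrib, ← Finset.mul_sum, h1]
  simp only [Finset.sum_const, Finset.card_univ, Fintype.card_fin, nsmul_eq_mul]
  linear_combination -scale m s (j + 1) * h.total j

lemma scale_anti (h : Good m s ρ) : StrictAnti (scale m s) := by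
  refine strictAnti_nat_of_succ_lt fun j => ?_
  have h1 := h.scale_succ j
  have h2 := h.two_le_base j
  have h3 := h.scale_pos (j + 1)
  nlinarith

lemma summable_term (h : Good m s ρ) : Summable (term m s ρ) := by
  rw [summable_sigma_of_nonneg fun p => (h.term_pos p).le]
  refine ⟨fun j => (hasSum_fintype _).summable, ?_⟩
  simp only [tsum_fintype, h.sum_block]
  exact (hasSum_telescope h.scale_anti.antitone h.scale_lim).summable.mul_left ρ

lemma mem_digits {k j : ℕ} {x : ℝ} : x ∈ digits (term m s ρ) k j ↔
    ∃ c : Fin (s j) → ℕ, (∀ i, c i ≤ k) ∧ ∃ d ≤ k * s j, x = scale m s (j + 1) *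
      (∑ i, c i * (offset m s ρ j + ((m j : ℝ) + 1) ^ (i : ℕ)) + (d : ℕ) * offset m s ρ j) := by
  constructor
  · rintro ⟨c, hc, rfl⟩
    refine ⟨fun i => c (i, true), fun i => hc _, ∑ i, c (i, false), ?_, ?_⟩
    · refine (Finset.sum_le_card_nsmul _ _ k fun i _ => hc _).trans ?_
      simp [mul_comm]
    · rw [Fintype.sum_prod_type]
      simp only [term, Fintype.sum_bool, if_true, Bool.false_eq_true, if_false]
      push_cast
      rw [Finset.sum_mul, ← Finset.sum_add_distrib, Finset.mul_sum]
      exact Finset.sum_congr rfl fun i _ => by ring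
  · rintro ⟨c, hc, d, hd, rfl⟩
    obtain ⟨c', hc', hsum⟩ := exists_decomp k (s j) d hd
    refine ⟨fun p => if p.2 then c p.1 else c' p.1, fun p => ?_, ?_⟩
    · dsimp only
      split_ifs
      · exact hc _
      · exact hc' _
    · rw [Fintype.sum_prod_type, ← hsum]
      simp only [term, Fintype.sum_bool, if_true, Bool.false_eq_true, if_false]
      push_cast
      rw [Finset.sum_mul, ← Finset.sum_add_distrib, Finset.mul_sum]
      exact Finset.sum_congr rfl fun i _ => by ring

lemma ncard_digits (m s : ℕ → ℕ) (ρ : ℝ) (k j : ℕ) :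
    (digits (term m s ρ) k j).Finite ∧
      (digits (term m s ρ) k j).ncard ≤ (k + 1) ^ s j * (k * s j + 1) := by
  let F : (Fin (s j) → Fin (k + 1)) × Fin (k * s j + 1) → ℝ := fun p => scale m s (j + 1) *
      (∑ i, (p.1 i : ℕ) * (offset m s ρ j + ((m j : ℝ) + 1) ^ (i : ℕ)) +
        (p.2 : ℕ) * offset m s ρ j)
  have hF : digits (term m s ρ) k j = F '' univ := by
    ext x
    rw [mem_digits]
    constructor
    · rintro ⟨c, hc, d, hd, rfl⟩
      exact ⟨(fun i => ⟨c i, Nat.lt_succ_of_le (hc i)⟩, ⟨d, Nat.lt_succ_of_le hd⟩), trivial, rfl⟩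
    · rintro ⟨p, -, rfl⟩
      exact ⟨fun i => p.1 i, fun i => Nat.le_of_lt_succ (p.1 i).2, p.2,
        Nat.le_of_lt_succ p.2.2, rfl⟩
  rw [hF]
  refine ⟨finite_univ.image F, (ncard_image_le finite_univ).trans ?_⟩
  simp [ncard_univ]

lemma digitSys (h : Good m s ρ) {k : ℕ} (hk : 1 ≤ k) :
    DigitSys (digits (term m s ρ) k) (fun j => k * ρ * scale m s j) := by
  have hk0 : (0 : ℝ) < k := by exact_mod_cast hk
  refine ⟨fun j => (ncard_digits m s ρ k j).1, fun j => ⟨fun _ => 0, fun _ => Nat.zero_le _, by simp⟩,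
    ?_, ?_, fun j => ?_, ?_⟩
  · rintro j x ⟨c, hc, rfl⟩
    exact Finset.sum_nonneg fun i _ => mul_nonneg (Nat.cast_nonneg _) (h.term_pos _).le
  · rintro j x ⟨c, hc, rfl⟩
    refine ⟨fun i => k - c i, fun i => Nat.sub_le _ _, ?_⟩
    have h1 : ∀ i, ((k - c i : ℕ) : ℝ) * term m s ρ ⟨j, i⟩ =
        k * term m s ρ ⟨j, i⟩ - c i * term m s ρ ⟨j, i⟩ := fun i => by
      rw [Nat.cast_sub (hc i)]; ring
    simp only [h1, Finset.sum_sub_distrib, ← Finset.mul_sum, h.sum_block]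
    ring
  · have := h.scale_anti (Nat.lt_succ_self j)
    have := h.ρ_pos
    gcongr
  · simpa using h.scale_lim.const_mul (k * ρ)

/-- For `k < m j` the block has at most half as many digits as the ratio of consecutive scales, so
the digit sums form a null set. -/
lemma isCantorSet (h : Good m s ρ) {k : ℕ} (hk : 1 ≤ k) (hkm : ∀ᶠ j in atTop, k < m j) :
    IsCantorSet (digitSums (digits (term m s ρ) k)) := by
  obtain ⟨n₀, hn⟩ := eventually_atTop.1 hkm
  refine (h.digitSys hk).isCantorSet ((h.digitSys hk).volume_eq_zero (C := k * ρ) h.scale_pos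
    h.scale_succ (fun j => le_rfl) (n₀ := n₀) fun j hj => ?_)
  have h1 := (ncard_digits m s ρ k j).2
  have h2 : (k + 1) ^ s j * (k * s j + 1) ≤ m j ^ s j * (m j * s j + 1) := by
    have := hn j hj
    gcongr
    omega
  have h3 := h.card j
  have h4 : 2 * (digits (term m s ρ) k j).ncard ≤ (m j + 1) ^ s j := by omega
  rw [base]
  exact_mod_cast h4

/-- For `m j ≤ k` the block digits fill an arithmetic progression that tiles the next larger
scale, so every tail set contains an interval. -/
lemma interior_tail (h : Good m s ρ) {k : ℕ} (hk : 1 ≤ k) (hmk : ∀ j, m j ≤ k) (n : ℕ) :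
    (interior (digitSums (fun j => digits (term m s ρ) k (j + n)))).Nonempty := by
  set H : ℕ → ℝ := fun j =>
    scale m s (j + n + 1) * ((m (j + n) * s (j + n) : ℕ) * offset m s ρ (j + n)) with hH
  have hmem : ∀ j, ∀ v < (m (j + n) + 1) ^ s (j + n),
      H j + scale m s (j + n + 1) * (v : ℕ) ∈ digits (term m s ρ) k (j + n) := by
    intro j v hv
    rw [mem_digits]
    -- the base `m + 1` expansion of `v`, with the digit sum compensated by copies of the offset
    set c := finFunctionFinEquiv.symm ⟨v, hv⟩ with hc
    have hcv : ∑ i, (c i : ℕ) * (m (j + n) + 1) ^ (i : ℕ) = v := by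
      rw [← finFunctionFinEquiv_apply, hc, Equiv.apply_symm_apply]
    have hcm : ∀ i, (c i : ℕ) ≤ m (j + n) := fun i => Nat.le_of_lt_succ (c i).2
    have hle : ∑ i, (c i : ℕ) ≤ m (j + n) * s (j + n) := by
      refine (Finset.sum_le_card_nsmul _ _ _ fun i _ => hcm i).trans ?_
      simp [mul_comm]
    refine ⟨fun i => c i, fun i => (hcm i).trans (hmk _),
      m (j + n) * s (j + n) - ∑ i, (c i : ℕ), ?_, ?_⟩
    · exact (Nat.sub_le _ _).trans (Nat.mul_le_mul_right _ (hmk _))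
    · rw [Nat.cast_sub hle, ← hcv, hH]
      push_cast
      simp only [mul_add, Finset.sum_add_distrib, ← Finset.sum_mul]
      ring
  have hHs : Summable H := by
    refine ((h.digitSys hk).shift n).summable fun j => ?_
    simpa using hmem j 0 (by positivity)
  have hI : Icc 0 (scale m s n) ⊆
      digitSums (fun j => {x | ∃ v < (m (j + n) + 1) ^ s (j + n),
        x = scale m s (j + n + 1) * (v : ℕ)}) := by
    have := greedy (D := fun j => {x | ∃ v < (m (j + n) + 1) ^ s (j + n),
        x = scale m s (j + n + 1) * (v : ℕ)}) (r := fun j => scale m s (j + n))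
      ((tendsto_add_atTop_iff_nat n).2 h.scale_lim) ?_ ?_
    · simpa using this
    · intro j x hx
      have hp := h.scale_pos (j + n + 1)
      have hsc := h.scale_succ (j + n)
      rw [show j + 1 + n = j + n + 1 by ring]
      set N := (m (j + n) + 1) ^ s (j + n) with hN
      have hbN : base m s (j + n) = (N : ℝ) := by simp [base, hN]
      have hN1 : 1 ≤ N := Nat.one_le_pow _ _ (by omega)
      set u := x / scale m s (j + n + 1) with hu
      have hxu : x = scale m s (j + n + 1) * u := by rw [hu]; field_simp
      have hu0 : 0 ≤ u := div_nonneg hx.1 hp.le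
      have huN : u ≤ N := by
        rw [hu, div_le_iff₀ hp, ← hbN, ← hsc]; exact hx.2
      refine ⟨_, ⟨min ⌊u⌋₊ (N - 1), by omega, rfl⟩, ?_⟩
      have hfl := Nat.floor_le hu0
      have hlt := Nat.lt_floor_add_one u
      have hv : ((min ⌊u⌋₊ (N - 1) : ℕ) : ℝ) ≤ u ∧ u ≤ (min ⌊u⌋₊ (N - 1) : ℕ) + 1 := by
        rcases le_total ⌊u⌋₊ (N - 1) with hh | hh
        · rw [min_eq_left hh]; exact ⟨hfl, hlt.le⟩
        · rw [min_eq_right hh]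
          have : ((N - 1 : ℕ) : ℝ) ≤ ⌊u⌋₊ := by exact_mod_cast hh
          refine ⟨this.trans hfl, ?_⟩
          rw [Nat.cast_sub hN1]; simpa using huN
      rw [hxu]
      constructor <;> nlinarith [hv.1, hv.2]
    · rintro j e ⟨v, -, rfl⟩
      exact mul_nonneg (h.scale_pos _).le (Nat.cast_nonneg _)
  have hsub : Ioo (∑' j, H j) (∑' j, H j + scale m s n) ⊆
      digitSums (fun j => digits (term m s ρ) k (j + n)) := by
    intro x hx
    obtain ⟨y, hy, hys⟩ := hI (show x - ∑' j, H j ∈ _ from ⟨by linarith [hx.1], by linarith [hx.2]⟩)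
    refine ⟨fun j => H j + y j, fun j => ?_, ?_⟩
    · obtain ⟨v, hv, hyv⟩ := hy j
      dsimp only
      rw [hyv]
      exact hmem j v hv
    · simpa using hHs.hasSum.add hys
  have := h.scale_pos n
  exact ⟨∑' j, H j + scale m s n / 2,
    interior_maximal hsub isOpen_Ioo ⟨by linarith, by linarith⟩⟩

lemma isCantorval (h : Good m s ρ) {k : ℕ} (hk : 1 ≤ k) (hmk : ∀ j, m j ≤ k)
    (hρt : ∀ j, ρ ≤ offset m s ρ j) (hfreq : ∃ᶠ j in atTop, k * ρ < offset m s ρ j) :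
    IsCantorval (digitSums (digits (term m s ρ) k)) := by
  refine (h.digitSys hk).isCantorval (γ := fun j => scale m s (j + 1) * offset m s ρ j)
    (antitone_nat_of_succ_le fun j => ?_) ?_ ?_ (h.interior_tail hk hmk)
  · have h1 := h.scale_succ (j + 1)
    have h2 : offset m s ρ (j + 1) ≤ ρ * base m s (j + 1) := by
      have h3 := h.total (j + 1)
      have h4 := h.two_le_base (j + 1)
      have h5 : (1 : ℝ) ≤ s (j + 1) := by exact_mod_cast h.hs (j + 1)
      have h6 : 0 ≤ (base m s (j + 1) - 1) / m (j + 1) :=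
        div_nonneg (by linarith) (h.m_pos _).le
      have h7 := h.offset_pos (j + 1)
      have h8 := h.ρ_pos
      nlinarith
    have h3 := h.scale_pos (j + 1 + 1)
    have h4 := h.scale_pos (j + 1)
    calc scale m s (j + 1 + 1) * offset m s ρ (j + 1)
        ≤ scale m s (j + 1 + 1) * (ρ * base m s (j + 1)) := by gcongr
      _ = scale m s (j + 1) * ρ := by rw [h1]; ring
      _ ≤ _ := by gcongr; exact hρt j
  · rintro j x ⟨c, hc, rfl⟩ hne
    obtain ⟨i, -, hi⟩ := Finset.exists_ne_zero_of_sum_ne_zero hne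
    have hci : (1 : ℝ) ≤ c i := by
      have : c i ≠ 0 := fun h0 => hi (by simp [h0])
      exact_mod_cast Nat.one_le_iff_ne_zero.2 this
    have h1 : scale m s (j + 1) * offset m s ρ j ≤ term m s ρ ⟨j, i⟩ := by
      rw [term]
      refine mul_le_mul_of_nonneg_left ?_ (h.scale_pos _).le
      split_ifs
      · exact le_add_of_nonneg_right (by positivity)
      · simp
    have h2 := h.term_pos ⟨j, i⟩
    have h3 : (c i : ℝ) * term m s ρ ⟨j, i⟩ ≤ ∑ i, c i * term m s ρ ⟨j, i⟩ :=
      Finset.single_le_sum (f := fun i => (c i : ℝ) * term m s ρ ⟨j, i⟩)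
        (fun i _ => mul_nonneg (Nat.cast_nonneg _) (h.term_pos _).le) (Finset.mem_univ i)
    nlinarith
  · refine hfreq.mono fun j hj => ?_
    have := h.scale_pos (j + 1)
    nlinarith

lemma eq_Icc (h : Good m s ρ) {k : ℕ} (hk : 1 ≤ k) (hmk : ∀ j, m j ≤ k)
    (ht : ∀ j, offset m s ρ j ≤ k * ρ) :
    digitSums (digits (term m s ρ) k) = Icc 0 (k * ρ * scale m s 0) := by
  refine Subset.antisymm (h.digitSys hk).subset
    (greedy (h.digitSys hk).lim (fun j x hx => ?_) (h.digitSys hk).nonneg)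
  have hp := h.scale_pos (j + 1)
  have hsc := h.scale_succ j
  set u := x / scale m s (j + 1) with hu
  have hxu : x = scale m s (j + 1) * u := by rw [hu]; field_simp
  obtain ⟨c, hc, d, hd, h0, h1⟩ := unit_cover (h.hm j) (h.hs j) (hmk j) (h.hρ j) (h.offset_pos j)
    (ht j) (h.total j) u ⟨div_nonneg hx.1 hp.le, by
      rw [hu, div_le_iff₀ hp, mul_assoc]
      have := hx.2
      rwa [hsc] at this⟩
  refine ⟨_, mem_digits.2 ⟨fun i => c i, fun i => hc _, d, hd, rfl⟩, ?_⟩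
  rw [Fin.sum_univ_eq_sum_range
    (fun i => (c i : ℝ) * (offset m s ρ j + ((m j : ℝ) + 1) ^ i)) (s j), hxu, ← mul_sub]
  exact ⟨mul_nonneg hp.le h0, by rw [mul_comm]; exact mul_le_mul_of_nonneg_right h1 hp.le⟩

end Good

lemma exists_sequence (h : Good m s ρ) (hm2 : ∀ j, 2 ≤ m j) :
    ∃ a : ℕ → ℝ, (∀ n, 0 < a n) ∧ Summable a ∧ IsCantorSet (achievementSet a) ∧ ∀ k : ℕ, 1 ≤ k →
      ((∀ᶠ j in atTop, k < m j) → IsCantorSet (sumN (achievementSet a) k)) ∧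
      ((∀ j, m j ≤ k) → (∀ j, ρ ≤ offset m s ρ j) → (∃ᶠ j in atTop, k * ρ < offset m s ρ j) →
        IsCantorval (sumN (achievementSet a) k)) ∧
      ((∀ j, m j ≤ k) → (∀ j, offset m s ρ j ≤ k * ρ) →
        ∃ u v : ℝ, u ≤ v ∧ sumN (achievementSet a) k = Icc u v) := by
  have : ∀ j, Nonempty (Fin (s j) × Bool) := fun j => ⟨(⟨0, h.hs j⟩, true)⟩
  have : Infinite (Σ j, Fin (s j) × Bool) :=
    Infinite.of_surjective (Sigma.fst) fun j => ⟨⟨j, Classical.arbitrary _⟩, rfl⟩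
  obtain ⟨e⟩ := nonempty_equiv_of_countable (α := ℕ) (β := Σ j, Fin (s j) × Bool)
  have hsum := sumN_eq_digitSums (fun p => (h.term_pos p).le) h.summable_term e
  refine ⟨term m s ρ ∘ e, fun n => h.term_pos _, (e.summable_iff).2 h.summable_term, ?_,
    fun k hk => ⟨fun hkm => ?_, fun h1 h2 h3 => ?_, fun h1 h2 => ?_⟩⟩
  · have h1 := hsum 1
    simp only [sumN, singleton_add, zero_add, image_id'] at h1
    rw [h1]
    exact h.isCantorSet le_rfl (Eventually.of_forall fun j => hm2 j)
  · rw [hsum]; exact h.isCantorSet hk hkm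
  · rw [hsum]; exact h.isCantorval hk h1 h2 h3
  · rw [hsum]
    have := h.ρ_pos
    have := h.scale_pos 0
    exact ⟨0, _, by positivity, h.eq_Icc hk h1 h2⟩

end Blocks

/-! ### Choice of the parameters -/

namespace Blocks

/-- The cardinality condition of `Good` holds for arbitrarily large blocks, as
`(m / (m + 1)) ^ s` decays exponentially. -/
lemma exists_size (m X : ℕ) : ∃ s, X ≤ s ∧ 1 ≤ s ∧ 2 * (m ^ s * (m * s + 1)) ≤ (m + 1) ^ s := by
  set r : ℝ := m / (m + 1) with hr
  have hm : (0 : ℝ) < (m : ℝ) + 1 := by positivity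
  have hr0 : 0 ≤ r := by positivity
  have hr1 : r < 1 := by rw [hr, div_lt_one hm]; linarith
  have hlim : Tendsto (fun s : ℕ => 2 * (m * (s * r ^ s) + r ^ s)) atTop (𝓝 0) := by
    have := (((tendsto_self_mul_const_pow_of_lt_one hr0 hr1).const_mul (m : ℝ)).add
      (tendsto_pow_atTop_nhds_zero_of_lt_one hr0 hr1)).const_mul 2
    simpa using this
  obtain ⟨s, hs, hX, h1⟩ := ((hlim.eventually (gt_mem_nhds one_pos)).and
    ((eventually_ge_atTop X).and (eventually_ge_atTop 1))).exists
  refine ⟨s, hX, h1, ?_⟩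
  have h2 : 2 * (m * (s * r ^ s) + r ^ s) * ((m : ℝ) + 1) ^ s ≤ 1 * ((m : ℝ) + 1) ^ s := by gcongr
  have h3 : r ^ s * ((m : ℝ) + 1) ^ s = m ^ s := by
    rw [← mul_pow, hr, div_mul_cancel₀ _ hm.ne']
  have h4 : 2 * ((m : ℝ) ^ s * (m * s + 1)) ≤ ((m : ℝ) + 1) ^ s := by
    rw [← h3]; linarith
  exact_mod_cast h4

/-- Lower bound for the offset in units of `ρ - 1 / m`. -/
lemma ratio_ge {m s : ℕ} (hm : 2 ≤ m) (hs : 1 ≤ s)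
    (h : 2 * (m ^ s * (m * s + 1)) ≤ (m + 1) ^ s) :
    (s : ℝ) ≤ (((m : ℝ) + 1) ^ s - 1) / (2 * s) := by
  have hs' : (0 : ℝ) < s := by exact_mod_cast hs
  have h1 : s + 1 ≤ m ^ s := (Nat.lt_pow_self (by omega) : s < m ^ s)
  have h2 : 2 * ((s + 1) * (2 * s + 1)) ≤ (m + 1) ^ s := by
    refine le_trans ?_ h
    gcongr
  have h3 : 2 * (((s : ℝ) + 1) * (2 * s + 1)) ≤ ((m : ℝ) + 1) ^ s := by exact_mod_cast h2
  rw [le_div_iff₀ (by positivity)]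
  nlinarith

end Blocks

/-- For any m, p ∈ (ℕ \ {1}) ∪ {∞} with m ≤ p there is an achievable
Cantor set C such that the k-fold sum C_k is a Cantor set for k < m, a Cantorval for
m ≤ k < p, and a closed interval for k ≥ p. -/
theorem stmt_15 (m p : ℕ∞) (hm : 2 ≤ m) (hp : m ≤ p) :
    ∃ a : ℕ → ℝ, (∀ n, 0 < a n) ∧ Summable a ∧ IsCantorSet (achievementSet a) ∧
      ∀ k : ℕ, 1 ≤ k →
        ((k : ℕ∞) < m → IsCantorSet (sumN (achievementSet a) k)) ∧
        (m ≤ (k : ℕ∞) → (k : ℕ∞) < p → IsCantorval (sumN (achievementSet a) k)) ∧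
        (p ≤ (k : ℕ∞) → ∃ u v : ℝ, u ≤ v ∧ sumN (achievementSet a) k = Set.Icc u v) := by
  induction m using ENat.recTopCoe with
  | top =>
    -- let the digit bounds `m j = j + 2` grow
    obtain rfl : p = ⊤ := top_le_iff.1 hp
    choose s _ hs1 hcard using fun j => Blocks.exists_size (j + 2) 0
    have hgood : Blocks.Good (fun j => j + 2) s 1 :=
      ⟨fun j => by omega, hs1, fun j => by
        rw [div_lt_one (by positivity)]; push_cast; linarith [(Nat.cast_nonneg j : (0 : ℝ) ≤ j)],
        hcard⟩
    obtain ⟨a, ha, hsum, hC, H⟩ := Blocks.exists_sequence hgood fun j => by omega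
    refine ⟨a, ha, hsum, hC, fun k hk => ⟨fun _ => (H k hk).1 ?_, fun h => ?_, fun h => ?_⟩⟩
    · exact (eventually_ge_atTop k).mono fun j hj => by omega
    · exact absurd h (by simp)
    · exact absurd h (by simp)
  | coe m =>
    have hm2 : 2 ≤ m := by exact_mod_cast hm
    have hm2' : (2 : ℝ) ≤ m := by exact_mod_cast hm2
    have hinv : 1 / (m : ℝ) ≤ 1 / 2 := one_div_le_one_div_of_le (by norm_num) hm2'
    induction p using ENat.recTopCoe with
    | top =>
      -- let the block sizes grow, so that the offsets tend to infinity
      choose s hX hs1 hcard using fun j => Blocks.exists_size m (2 * (j + 1))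
      have hgood : Blocks.Good (fun _ => m) s 1 :=
        ⟨fun j => by omega, hs1, fun j => by linarith, hcard⟩
      have hoff : ∀ j : ℕ, (j : ℝ) + 1 ≤ Blocks.offset (fun _ => m) s 1 j := by
        intro j
        have h1 := Blocks.ratio_ge hm2 (hs1 j) (hcard j)
        have h2 : 2 * ((j : ℝ) + 1) ≤ s j := by exact_mod_cast hX j
        rw [Blocks.offset, mul_div_assoc, Blocks.base]
        nlinarith
      obtain ⟨a, ha, hsum, hC, H⟩ := Blocks.exists_sequence hgood fun _ => hm2
      refine ⟨a, ha, hsum, hC, fun k hk => ⟨fun h => (H k hk).1 ?_,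
        fun h _ => (H k hk).2.1 (fun _ => by exact_mod_cast h) (fun j => ?_) ?_, fun h => ?_⟩⟩
      · exact Eventually.of_forall fun _ => by exact_mod_cast h
      · linarith [hoff j, (Nat.cast_nonneg j : (0 : ℝ) ≤ j)]
      · refine ((eventually_ge_atTop k).mono fun j hj => ?_).frequently
        have h1 : (k : ℝ) ≤ j := by exact_mod_cast hj
        linarith [hoff j]
      · exact absurd h (by simp)
    | coe p =>
      -- constant parameters, with `ρ` chosen to make the offset equal to `p * ρ`
      have hmp : m ≤ p := by exact_mod_cast hp
      obtain ⟨s, hX, hs1, hcard⟩ := Blocks.exists_size m (p + 1)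
      have hQ := Blocks.ratio_ge hm2 hs1 hcard
      set Q : ℝ := (((m : ℝ) + 1) ^ s - 1) / (2 * s) with hQdef
      have hp0 : (1 : ℝ) ≤ p := by exact_mod_cast (by omega : 1 ≤ p)
      have hQp : (p : ℝ) + 1 ≤ Q := le_trans (by exact_mod_cast hX) hQ
      have hm0 : (0 : ℝ) < m := by linarith
      have hQp0 : 0 < Q - p := by linarith
      set ρ : ℝ := Q / m / (Q - p) with hρdef
      have hρm : 1 / (m : ℝ) < ρ := by
        rw [hρdef, lt_div_iff₀ hQp0, div_mul_eq_mul_div, one_mul]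
        gcongr
        linarith
      have hρ0 : 0 < ρ := lt_trans (one_div_pos.2 hm0) hρm
      have hgood : Blocks.Good (fun _ => m) (fun _ => s) ρ :=
        ⟨fun j => by omega, fun _ => hs1, fun _ => hρm, fun _ => hcard⟩
      have hoff : ∀ j : ℕ, Blocks.offset (fun _ => m) (fun _ => s) ρ j = p * ρ := by
        intro j
        rw [Blocks.offset, mul_div_assoc, Blocks.base, ← hQdef]
        have : ρ * (Q - p) = Q / m := by rw [hρdef]; field_simp
        have h2 : 1 / (m : ℝ) * Q = Q / m := by ring
        linarith
      obtain ⟨a, ha, hsum, hC, H⟩ := Blocks.exists_sequence hgood fun _ => hm2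
      refine ⟨a, ha, hsum, hC, fun k hk => ⟨fun h => (H k hk).1 ?_,
        fun h h' => (H k hk).2.1 (fun _ => by exact_mod_cast h) (fun j => ?_) ?_,
        fun h => (H k hk).2.2 (fun _ => ?_) fun j => ?_⟩⟩
      · exact Eventually.of_forall fun _ => by exact_mod_cast h
      · rw [hoff]; nlinarith
      · refine (Eventually.of_forall fun j => ?_).frequently
        have h1 : (k : ℝ) < p := by exact_mod_cast h'
        rw [hoff]; gcongr
      · exact hmp.trans (by exact_mod_cast h)
      · have h1 : (p : ℝ) ≤ k := by exact_mod_cast h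
        rw [hoff]; gcongr
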